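/- Let (X,T) be a uniquely ergodic t.d.s. whose unique invariant Borel probability measure μ makes (X,ℬ(X),μ,T) weakly mixing, and let d ∈ ℕ. Then the action on X^d of the group ⟨τ_d,σ_d⟩ generated by τ_d = T×···×T (d times) and σ_d = T×T²×···×T^d is uniquely ergodic, and its unique invariant measure is the d-fold product measure μ×···×μ. -/

import Mathlib

open MeasureTheory Topology Filter

namespace HSY

/-- The group structure on self-homeomorphisms of a topological space,
with `a * b = b.trans a` (i.e. composition `a ∘ b`). -/
instance homeoGroup (X : Type*) [TopologicalSpace X] : Group (X ≃ₜ X) where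
  mul a b := b.trans a
  one := Homeomorph.refl X
  inv := Homeomorph.symm
  mul_assoc a b c := rfl
  one_mul a := by ext x; rfl
  mul_one a := by ext x; rfl
  inv_mul_cancel a := by
    show a.trans a.symm = Homeomorph.refl X
    ext x; exact a.symm_apply_apply x

/-- `τ_d = S × ⋯ × S` (`d` times) acting on `Y^d`. -/
def tauHomeo {Y : Type*} [TopologicalSpace Y] (S : Y ≃ₜ Y) (d : ℕ) :
    (Fin d → Y) ≃ₜ (Fin d → Y) :=
  Homeomorph.piCongrRight fun _ => S

/-- `σ_d = S × S² × ⋯ × S^d` acting on `Y^d`. -/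
def sigmaHomeo {Y : Type*} [TopologicalSpace Y] (S : Y ≃ₜ Y) (d : ℕ) :
    (Fin d → Y) ≃ₜ (Fin d → Y) :=
  Homeomorph.piCongrRight fun i => S ^ ((i : ℕ) + 1)

/-- The generators `τ_d, σ_d` of the group `⟨τ_d, σ_d⟩`. -/
def apGens {Y : Type*} [TopologicalSpace Y] (S : Y ≃ₜ Y) (d : ℕ) :
    Set ((Fin d → Y) ≃ₜ (Fin d → Y)) :=
  {tauHomeo S d, sigmaHomeo S d}

/-!
Weak mixing means that correlations `μ (A ∩ T⁻ⁿ B)` converge to `μ A * μ B` in the strong Cesàro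
sense. Unlike ordinary Cesàro convergence, this passes to finite products and to subsequences
`n ↦ k * n` of bounded sequences, so `T^k₁ × ⋯ × T^kᵣ` is ergodic for `μ × ⋯ × μ` as soon as all
`kᵢ > 0`.

Let `ν` be invariant under `τ = T × ⋯ × T` and `σ = T^k₁ × ⋯ × T^k_d` with distinct exponents. Its
marginals are `T`-invariant, hence equal to `μ`. If `k_p` is the smallest exponent, then
`τ^(-k_p) σ` is the identity on the `p`-th coordinate and has positive exponents `kᵢ - k_p` on the
others. By induction on `d` the joint law of these other coordinates is `μ × ⋯ × μ`, for which this
map is ergodic; and a coupling invariant under `id × (ergodic)` is the product of its marginals.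
-/

open Function
open scoped BigOperators

section StrongCesaro

/-- Strong Cesàro convergence of a real sequence to `c`, that is `N⁻¹ ∑_{n < N} |a n - c| → 0`.
For bounded sequences this is convergence along a set of density one; unlike convergence of the
averages of `a`, it is stable under products. -/
def StrongCesaroTendsto (a : ℕ → ℝ) (c : ℝ) : Prop :=
  Tendsto (fun N => 𝔼 n ∈ Finset.range N, |a n - c|) atTop (𝓝 0)

theorem tendsto_expect_range_const (c : ℝ) :
    Tendsto (fun N => 𝔼 _n ∈ Finset.range N, c) atTop (𝓝 c) :=
  tendsto_const_nhds.congr' <| (eventually_gt_atTop 0).mono fun _ hN =>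
    (Finset.expect_const (Finset.nonempty_range_iff.2 hN.ne') c).symm

variable {a b : ℕ → ℝ} {c e K : ℝ}

theorem strongCesaroTendsto_const (c : ℝ) : StrongCesaroTendsto (fun _ => c) c := by
  simp [StrongCesaroTendsto]

theorem StrongCesaroTendsto.tendsto_expect (h : StrongCesaroTendsto a c) :
    Tendsto (fun N => 𝔼 n ∈ Finset.range N, a n) atTop (𝓝 c) := by
  have hsub : Tendsto (fun N => 𝔼 n ∈ Finset.range N, (a n - c)) atTop (𝓝 0) :=
    squeeze_zero_norm (fun N => Finset.abs_expect_le _ _) h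
  simpa [Finset.expect_sub_distrib] using hsub.add (tendsto_expect_range_const c)

theorem StrongCesaroTendsto.of_tendsto_expect_sq
    (h₁ : Tendsto (fun N => 𝔼 n ∈ Finset.range N, a n) atTop (𝓝 c))
    (h₂ : Tendsto (fun N => 𝔼 n ∈ Finset.range N, a n ^ 2) atTop (𝓝 (c ^ 2))) :
    StrongCesaroTendsto a c := by
  have hvar : Tendsto (fun N => 𝔼 n ∈ Finset.range N, (a n - c) ^ 2) atTop (𝓝 0) := by
    convert (h₂.sub (h₁.mul_const (2 * c))).add (tendsto_expect_range_const (c ^ 2)) using 2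
    · rw [Finset.expect_mul, ← Finset.expect_sub_distrib, ← Finset.expect_add_distrib]
      exact Finset.expect_congr rfl fun n _ => by ring
    · ring
  refine squeeze_zero (fun N => Finset.expect_nonneg fun n _ => abs_nonneg _)
    (fun N => Real.le_sqrt_of_sq_le ?_) (Real.sqrt_zero ▸ hvar.sqrt)
  rcases N.eq_zero_or_pos with rfl | hN
  · simp
  · simpa [(Finset.nonempty_range_iff.2 hN.ne')] using
      Finset.expect_mul_sq_le_sq_mul_sq (Finset.range N) (fun n => |a n - c|) 1

theorem StrongCesaroTendsto.comp_const_mul (h : StrongCesaroTendsto a c) {k : ℕ} (hk : 0 < k) :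
    StrongCesaroTendsto (fun n => a (k * n)) c := by
  have hlim := (h.comp (tendsto_id.const_mul_atTop' hk)).const_mul (k : ℝ)
  rw [mul_zero] at hlim
  refine squeeze_zero (fun N => Finset.expect_nonneg fun n _ => abs_nonneg _) (fun N => ?_) hlim
  have hsum : ∑ n ∈ Finset.range N, |a (k * n) - c| ≤ ∑ m ∈ Finset.range (k * N), |a m - c| := by
    rw [← Finset.sum_image (f := fun m => |a m - c|) (mul_right_injective₀ hk.ne').injOn]
    refine Finset.sum_le_sum_of_subset_of_nonneg ?_ fun _ _ _ => abs_nonneg _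
    simpa [Finset.image_subset_iff] using fun n hn => Nat.mul_lt_mul_of_pos_left hn hk
  have hk₀ : (k : ℝ) ≠ 0 := by positivity
  simp only [comp_apply, id, Finset.expect_eq_sum_div_card, Finset.card_range]
  calc (∑ n ∈ Finset.range N, |a (k * n) - c|) / N
      ≤ (∑ m ∈ Finset.range (k * N), |a m - c|) / N := by gcongr
    _ = k * ((∑ m ∈ Finset.range (k * N), |a m - c|) / (k * N : ℕ)) := by
      push_cast
      field_simp

theorem StrongCesaroTendsto.mul (ha : StrongCesaroTendsto a c) (hb : StrongCesaroTendsto b e)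
    (hK : ∀ n, |a n| ≤ K) : StrongCesaroTendsto (fun n => a n * b n) (c * e) := by
  have hlim : Tendsto (fun N => K * 𝔼 n ∈ Finset.range N, |b n - e| +
      (𝔼 n ∈ Finset.range N, |a n - c|) * |e|) atTop (𝓝 0) := by
    simpa using (hb.const_mul K).add (ha.mul_const |e|)
  refine squeeze_zero (fun N => Finset.expect_nonneg fun n _ => abs_nonneg _) (fun N => ?_) hlim
  rw [Finset.mul_expect, Finset.expect_mul, ← Finset.expect_add_distrib]
  refine Finset.expect_le_expect fun n _ => ?_
  calc |a n * b n - c * e| = |a n * (b n - e) + (a n - c) * e| := by ring_nf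
    _ ≤ |a n| * |b n - e| + |a n - c| * |e| := by
      simpa only [abs_mul] using abs_add_le (a n * (b n - e)) ((a n - c) * e)
    _ ≤ K * |b n - e| + |a n - c| * |e| := by gcongr; exact hK n

theorem StrongCesaroTendsto.prod {ι : Type*} (s : Finset ι) {a : ι → ℕ → ℝ} {c K : ι → ℝ}
    (h : ∀ i ∈ s, StrongCesaroTendsto (a i) (c i)) (hK : ∀ i ∈ s, ∀ n, |a i n| ≤ K i) :
    StrongCesaroTendsto (fun n => ∏ i ∈ s, a i n) (∏ i ∈ s, c i) := by
  classical
  induction s using Finset.induction_on with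
  | empty => simpa using strongCesaroTendsto_const 1
  | insert i s hi ih =>
    rw [Finset.forall_mem_insert] at h hK
    simpa only [Finset.prod_insert hi] using h.1.mul (ih h.2 hK.2) hK.1

end StrongCesaro

section MeanErgodic

variable {Ω : Type*} [MeasurableSpace Ω] {ρ : Measure Ω} [IsProbabilityMeasure ρ] {S : Ω → Ω}

open scoped InnerProductSpace in
theorem tendsto_birkhoffAverage_compMeasurePreserving (𝕜 : Type*) {E : Type*} [RCLike 𝕜]
    [NormedAddCommGroup E] [InnerProductSpace 𝕜 E] [NormedSpace ℝ E] [CompleteSpace E]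
    (hS : Ergodic S ρ) (f : Lp E 2 ρ) :
    Tendsto (birkhoffAverage 𝕜 (Lp.compMeasurePreserving S hS.toMeasurePreserving) id · f) atTop
      (𝓝 (Lp.const 2 ρ (∫ x, f x ∂ρ))) := by
  let U := (Lp.compMeasurePreservingₗᵢ 𝕜 (E := E) (p := 2) S
    hS.toMeasurePreserving).toContinuousLinearMap
  have hlim := U.tendsto_birkhoffAverage_orthogonalProjection
    (LinearIsometry.norm_toContinuousLinearMap_le _) f
  have hconst (g : Lp E 2 ρ) (hg : U g = g) : ∃ c, g =ᵐ[ρ] const Ω c := by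
    refine hS.ae_eq_const_of_ae_eq_comp_ae (Lp.aestronglyMeasurable g) ?_
    have := Lp.coeFn_compMeasurePreserving g hS.toMeasurePreserving
    rw [show Lp.compMeasurePreserving S hS.toMeasurePreserving g = g from hg] at this
    exact this.symm
  have hproj : (U.eqLocus (1 : Lp E 2 ρ →L[𝕜] Lp E 2 ρ)).starProjection f =
      Lp.const 2 ρ (∫ x, f x ∂ρ) := by
    refine Submodule.eq_starProjection_of_mem_of_inner_eq_zero ?_ fun g hg => ?_
    · exact Lp.toLp_compMeasurePreserving (memLp_const _) hS.toMeasurePreserving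
    · obtain ⟨c, hc⟩ := hconst g hg
      have hint : Integrable f ρ := (Lp.memLp f).integrable one_le_two
      rw [inner_eq_zero_symm, L2.inner_def]
      calc ∫ x, ⟪g x, (f - Lp.const 2 ρ (∫ y, f y ∂ρ) : Lp E 2 ρ) x⟫_𝕜 ∂ρ
          = ∫ x, ⟪c, f x - ∫ y, f y ∂ρ⟫_𝕜 ∂ρ := by
            refine integral_congr_ae ?_
            filter_upwards [hc, Lp.coeFn_sub f (Lp.const 2 ρ (∫ y, f y ∂ρ)),
              Lp.coeFn_const 2 ρ (∫ y, f y ∂ρ)] with x hgx hsub hmean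
            rw [hgx, hsub, Pi.sub_apply, hmean]
            rfl
        _ = 0 := by
            rw [integral_inner (f := fun x => f x - ∫ y, f y ∂ρ) (hint.sub (integrable_const _)),
              integral_sub hint (integrable_const _)]
            simp
  exact hproj ▸ hlim

theorem tendsto_expect_measureReal_inter (hS : Ergodic S ρ) {A B : Set Ω}
    (hA : MeasurableSet A) (hB : MeasurableSet B) :
    Tendsto (fun N => 𝔼 n ∈ Finset.range N, ρ.real (A ∩ S^[n] ⁻¹' B)) atTop
      (𝓝 (ρ.real A * ρ.real B)) := by
  have hm := hS.toMeasurePreserving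
  have hBn (n : ℕ) : MeasurableSet (S^[n] ⁻¹' B) := (hm.measurable.iterate n) hB
  have hiter (n : ℕ) : (Lp.compMeasurePreserving S hm)^[n]
      (indicatorConstLp 2 hB (measure_ne_top ρ B) (1 : ℝ)) =
        indicatorConstLp 2 (hBn n) (measure_ne_top ρ _) 1 := by
    rw [Lp.compMeasurePreserving_iterate]
    exact Lp.indicatorConstLp_compMeasurePreserving hB (measure_ne_top ρ B) 1 (hm.iterate n)
  have hlim := (tendsto_const_nhds (x := indicatorConstLp 2 hA (measure_ne_top ρ A) (1 : ℝ))).inner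
    (𝕜 := ℝ) (tendsto_birkhoffAverage_compMeasurePreserving ℝ hS
      (indicatorConstLp 2 hB (measure_ne_top ρ B) (1 : ℝ)))
  convert hlim using 2 with N
  · simp_rw [birkhoffAverage, birkhoffSum, inner_smul_right, inner_sum, id, hiter,
      L2.real_inner_indicatorConstLp_one_indicatorConstLp_one]
    rw [Finset.expect_eq_sum_div_card, Finset.card_range, div_eq_inv_mul]
  · rw [L2.inner_indicatorConstLp_one, setIntegral_congr_ae hA
      ((Lp.coeFn_const 2 ρ _).mono fun x hx _ => hx)]
    simp [integral_indicatorConstLp]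

end MeanErgodic

section PiSystem

variable {Ω : Type*} [MeasurableSpace Ω] {ρ : Measure Ω} {C : Set (Set Ω)}

theorem hasSum_measureReal_iUnion [IsFiniteMeasure ρ] {f : ℕ → Set Ω}
    (hf : ∀ i, MeasurableSet (f i)) (hd : Pairwise (Disjoint on f)) :
    HasSum (fun i => ρ.real (f i)) (ρ.real (⋃ i, f i)) := by
  convert (summable_measure_toReal (μ := ρ) hf hd).hasSum using 1
  rw [measureReal_def, measure_iUnion hd hf, ENNReal.tsum_toReal_eq fun i => measure_ne_top ρ _]
  rfl

theorem tendsto_expect_measureReal_of_isPiSystem {κ : ℕ → Measure Ω} {θ : Measure Ω}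
    [IsFiniteMeasure ρ] [IsFiniteMeasure θ] (hκ : ∀ n, κ n ≤ ρ)
    (hgen : ‹MeasurableSpace Ω› = MeasurableSpace.generateFrom C) (hpi : IsPiSystem C)
    (huniv : Tendsto (fun N => 𝔼 n ∈ Finset.range N, (κ n).real .univ) atTop (𝓝 (θ.real .univ)))
    (hC : ∀ A ∈ C, Tendsto (fun N => 𝔼 n ∈ Finset.range N, (κ n).real A) atTop (𝓝 (θ.real A)))
    {A : Set Ω} (hA : MeasurableSet A) :
    Tendsto (fun N => 𝔼 n ∈ Finset.range N, (κ n).real A) atTop (𝓝 (θ.real A)) := by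
  have hfin (n : ℕ) : IsFiniteMeasure (κ n) := isFiniteMeasure_of_le ρ (hκ n)
  induction A, hA using MeasurableSpace.induction_on_inter hgen hpi with
  | empty => simp
  | basic A hA => exact hC A hA
  | compl A hA ih =>
    simpa only [measureReal_compl hA, Finset.expect_sub_distrib] using huniv.sub ih
  | iUnion f hd hf ih =>
    have hsum (N : ℕ) : ∑' i, 𝔼 n ∈ Finset.range N, (κ n).real (f i) =
        𝔼 n ∈ Finset.range N, (κ n).real (⋃ i, f i) := by
      simp_rw [Finset.expect_eq_sum_div_card]
      exact ((hasSum_sum fun n _ => hasSum_measureReal_iUnion hf hd).div_const _).tsum_eq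
    simp_rw [← hsum, ← (hasSum_measureReal_iUnion hf hd).tsum_eq]
    refine tendsto_tsum_of_dominated_convergence
      (hasSum_measureReal_iUnion (ρ := ρ) hf hd).summable ih ?_
    filter_upwards [eventually_gt_atTop 0] with N hN i
    rw [Real.norm_of_nonneg (Finset.expect_nonneg fun n _ => measureReal_nonneg)]
    exact Finset.expect_le (Finset.nonempty_range_iff.2 hN.ne') fun n _ =>
      ENNReal.toReal_mono (measure_ne_top ρ _) (hκ n _)

variable [IsProbabilityMeasure ρ] {S : Ω → Ω}

theorem tendsto_expect_measureReal_inter_of_isPiSystem (hS : MeasurePreserving S ρ ρ)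
    (hgen : ‹MeasurableSpace Ω› = MeasurableSpace.generateFrom C) (hpi : IsPiSystem C)
    {A B : Set Ω} (hA : MeasurableSet A) (hB : MeasurableSet B)
    (hC : ∀ A ∈ C, Tendsto (fun N => 𝔼 n ∈ Finset.range N, ρ.real (A ∩ S^[n] ⁻¹' B)) atTop
      (𝓝 (ρ.real A * ρ.real B))) :
    Tendsto (fun N => 𝔼 n ∈ Finset.range N, ρ.real (A ∩ S^[n] ⁻¹' B)) atTop
      (𝓝 (ρ.real A * ρ.real B)) := by
  have hθ : IsFiniteMeasure (ρ B • ρ) := ρ.smul_finite (measure_ne_top ρ B)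
  have hlim := tendsto_expect_measureReal_of_isPiSystem (θ := ρ B • ρ)
    (κ := fun n => ρ.restrict (S^[n] ⁻¹' B)) (fun n => Measure.restrict_le_self) hgen hpi
    ?_ (fun A hA => ?_) hA
  · simpa [measureReal_restrict_apply hA, measureReal_def, mul_comm] using hlim
  · simpa [measureReal_def, (hS.iterate _).measure_preimage hB.nullMeasurableSet]
      using tendsto_expect_range_const (ρ.real B)
  · have hA' : MeasurableSet A := hgen ▸ MeasurableSpace.measurableSet_generateFrom hA
    simpa [measureReal_restrict_apply hA', measureReal_def, mul_comm] using hC A hA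

open ProbabilityTheory in
theorem ergodic_of_isPiSystem (hS : MeasurePreserving S ρ ρ)
    (hgen : ‹MeasurableSpace Ω› = MeasurableSpace.generateFrom C) (hpi : IsPiSystem C)
    (hC : ∀ A ∈ C, ∀ B ∈ C, Tendsto (fun N => 𝔼 n ∈ Finset.range N, ρ.real (A ∩ S^[n] ⁻¹' B)) atTop
      (𝓝 (ρ.real A * ρ.real B))) : Ergodic S ρ := by
  -- An invariant set is independent of `C`, hence of the whole `σ`-algebra, hence of itself.
  refine ⟨hS, ⟨fun A hA hinv => ?_⟩⟩
  have hind {B : Set Ω} (hB : B ∈ C) : ρ.real (A ∩ B) = ρ.real A * ρ.real B := by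
    have hBm : MeasurableSet B := hgen ▸ MeasurableSpace.measurableSet_generateFrom hB
    refine tendsto_nhds_unique ?_ (tendsto_expect_measureReal_inter_of_isPiSystem hS hgen hpi hA hBm
      fun A hA => hC A hA B hB)
    refine (tendsto_expect_range_const (ρ.real (A ∩ B))).congr fun N =>
      Finset.expect_congr rfl fun n _ => ?_
    have hpre : A ∩ S^[n] ⁻¹' B = S^[n] ⁻¹' (A ∩ B) := by
      rw [Set.preimage_inter, IsFixedPt.preimage_iterate hinv n]
    rw [hpre, (hS.iterate n).measureReal_preimage (hA.inter hBm).nullMeasurableSet]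
  have hindep : Indep (MeasurableSpace.generateFrom {A}) ‹MeasurableSpace Ω› ρ := by
    refine IndepSets.indep (MeasurableSpace.generateFrom_le (by simpa)) le_rfl
      (IsPiSystem.singleton A) hpi rfl hgen ?_
    rw [IndepSets_iff]
    rintro _ B rfl hB
    rw [← ENNReal.toReal_eq_toReal_iff' (measure_ne_top ρ _) (by finiteness), ENNReal.toReal_mul]
    exact hind hB
  have h01 := measure_eq_zero_or_one_of_indepSet_self
    (hindep.indepSet_of_measurableSet (MeasurableSpace.measurableSet_generateFrom rfl) hA)
  rwa [eventuallyConst_set', ae_eq_empty, ae_eq_univ_iff_measure_eq hA.nullMeasurableSet,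
    measure_univ]

end PiSystem

section WeaklyMixing

variable {Ω : Type*} [MeasurableSpace Ω] {ρ : Measure Ω} {S : Ω → Ω}

/-- Weak mixing in its correlation form: `N⁻¹ ∑_{n < N} |ρ (A ∩ S⁻ⁿ B) - ρ A * ρ B| → 0` for all
measurable `A`, `B`. It follows from ergodicity of `S × S` (`WeaklyMixing.of_ergodic_prodMap`);
unlike that condition, it is visibly inherited by iterates and by finite products. -/
structure WeaklyMixing (S : Ω → Ω) (ρ : Measure Ω) : Prop extends MeasurePreserving S ρ ρ where
  strongCesaroTendsto_inter {A B : Set Ω} (hA : MeasurableSet A) (hB : MeasurableSet B) :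
    StrongCesaroTendsto (fun n => ρ.real (A ∩ S^[n] ⁻¹' B)) (ρ.real A * ρ.real B)

theorem measurePreserving_of_prodMap [IsProbabilityMeasure ρ]
    (h : MeasurePreserving (Prod.map S S) (ρ.prod ρ) (ρ.prod ρ)) : MeasurePreserving S ρ ρ :=
  measurePreserving_fst.of_semiconj h (fun _ => rfl) <|
    measurable_fst.comp (h.measurable.comp (measurable_id.prodMk measurable_id))

theorem WeaklyMixing.of_ergodic_prodMap [IsProbabilityMeasure ρ]
    (h : Ergodic (Prod.map S S) (ρ.prod ρ)) : WeaklyMixing S ρ where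
  toMeasurePreserving := measurePreserving_of_prodMap h.toMeasurePreserving
  strongCesaroTendsto_inter {A B} hA hB := by
    have hpre (n : ℕ) (C D : Set Ω) :
        (Prod.map S S)^[n] ⁻¹' (C ×ˢ D) = (S^[n] ⁻¹' C) ×ˢ (S^[n] ⁻¹' D) := by
      rw [Prod.map_iterate, Set.preimage_prod_map_prod]
    have h₁ := tendsto_expect_measureReal_inter h (hA.prod .univ) (hB.prod .univ)
    have h₂ := tendsto_expect_measureReal_inter h (hA.prod hA) (hB.prod hB)
    simp only [hpre, Set.prod_inter_prod, measureReal_prod_prod, Set.preimage_univ,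
      Set.inter_univ, probReal_univ, mul_one] at h₁ h₂
    refine .of_tendsto_expect_sq h₁ ?_
    simpa only [sq, mul_mul_mul_comm] using h₂

theorem WeaklyMixing.iterate (h : WeaklyMixing S ρ) {k : ℕ} (hk : 0 < k) :
    WeaklyMixing S^[k] ρ where
  toMeasurePreserving := h.toMeasurePreserving.iterate k
  strongCesaroTendsto_inter hA hB := by
    simpa only [iterate_mul] using (h.strongCesaroTendsto_inter hA hB).comp_const_mul hk

theorem WeaklyMixing.ergodic_piMap {ι : Type*} [Fintype ι] {Y : ι → Type*}
    [∀ i, MeasurableSpace (Y i)] {ρ : ∀ i, Measure (Y i)} [∀ i, IsProbabilityMeasure (ρ i)]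
    {S : ∀ i, Y i → Y i} (h : ∀ i, WeaklyMixing (S i) (ρ i)) :
    Ergodic (Pi.map S) (Measure.pi ρ) := by
  refine ergodic_of_isPiSystem (measurePreserving_pi ρ ρ fun i => (h i).toMeasurePreserving)
    generateFrom_pi.symm isPiSystem_pi ?_
  rintro _ ⟨A, hA, rfl⟩ _ ⟨B, hB, rfl⟩
  have hreal (s : ∀ i, Set (Y i)) :
      (Measure.pi ρ).real (Set.univ.pi s) = ∏ i, (ρ i).real (s i) := by
    simp [measureReal_def, Measure.pi_pi, ENNReal.toReal_prod]
  have hinter (n : ℕ) : Set.univ.pi A ∩ (Pi.map S)^[n] ⁻¹' Set.univ.pi B =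
      Set.univ.pi fun i => A i ∩ (S i)^[n] ⁻¹' B i := by
    rw [Pi.map_iterate, Set.pi_inter_distrib]
    rfl
  simp only [hinter, hreal, ← Finset.prod_mul_distrib]
  exact (StrongCesaroTendsto.prod (K := 1) Finset.univ
    (fun i _ => (h i).strongCesaroTendsto_inter (hA i trivial) (hB i trivial))
    fun i _ n => by simp [abs_of_nonneg]).tendsto_expect

end WeaklyMixing

section Joining

theorem measurable_piMap {ι : Type*} {Y : ι → Type*} [∀ i, MeasurableSpace (Y i)]
    {S : ∀ i, Y i → Y i} (hS : ∀ i, Measurable (S i)) : Measurable (Pi.map S) :=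
  measurable_pi_lambda _ fun i => (hS i).comp (measurable_pi_apply i)

theorem eq_prod_of_measurePreserving_prodMap_id {α Ω : Type*} [MeasurableSpace α]
    [MeasurableSpace Ω] {m : Measure (α × Ω)} [IsProbabilityMeasure m] {S : Ω → Ω}
    (hm : MeasurePreserving (Prod.map id S) m m) (hS : Ergodic S m.snd) :
    m = m.fst.prod m.snd := by
  -- `D ↦ m (A ×ˢ D)` is `S`-invariant and absolutely continuous, so ergodicity makes it a multiple
  -- of `m.snd`.
  refine (Measure.prod_eq fun A B hA hB => ?_).symm
  let κ : Measure Ω := (m.restrict (Prod.fst ⁻¹' A)).snd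
  have hκ {D : Set Ω} (hD : MeasurableSet D) : κ D = m (A ×ˢ D) := by
    rw [Measure.snd_apply hD, Measure.restrict_apply (measurable_snd hD), Set.inter_comm]
    rfl
  have hinv : MeasurePreserving S κ κ :=
    (measurable_snd.measurePreserving _).of_semiconj
      (hm.restrict_preimage (measurable_fst hA)) (fun _ => rfl) hS.measurable
  have hac : κ ≪ m.snd := Measure.restrict_le_self.absolutelyContinuous.map measurable_snd
  obtain ⟨c, hc⟩ := hS.eq_smul_of_absolutelyContinuous hinv hac
  have hcA : m.fst A = c := by
    rw [Measure.fst_apply hA, ← Set.prod_univ, ← hκ .univ, hc]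
    simp
  rw [hcA, ← hκ hB, hc]
  rfl

theorem WeaklyMixing.eq_pi_of_map_removeNth {d : ℕ} {Y : Fin (d + 1) → Type*}
    [∀ i, MeasurableSpace (Y i)] {μ : ∀ i, Measure (Y i)} [∀ i, IsProbabilityMeasure (μ i)]
    {S : ∀ i, Y i → Y i} {p : Fin (d + 1)} (hp : S p = id)
    (hwm : ∀ j, WeaklyMixing (S (p.succAbove j)) (μ (p.succAbove j)))
    {ν : Measure (∀ i, Y i)} [IsProbabilityMeasure ν] (hS : MeasurePreserving (Pi.map S) ν ν)
    (heval : ν.map (eval p) = μ p)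
    (hremove : ν.map p.removeNth = Measure.pi fun j => μ (p.succAbove j)) :
    ν = Measure.pi μ := by
  let e := MeasurableEquiv.piFinSuccAbove Y p
  let m := ν.map e
  have hm : IsProbabilityMeasure m := Measure.isProbabilityMeasure_map e.measurable.aemeasurable
  have hfst : m.fst = μ p := (Measure.map_map measurable_fst e.measurable).trans heval
  have hsnd : m.snd = Measure.pi fun j => μ (p.succAbove j) :=
    (Measure.map_map measurable_snd e.measurable).trans hremove
  have hinv : MeasurePreserving (Prod.map id (Pi.map fun j => S (p.succAbove j))) m m :=
    (e.measurable.measurePreserving ν).of_semiconj hS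
      (fun x => Prod.ext (congrFun hp (x p)) rfl)
      (measurable_id.prodMap (measurable_piMap fun j => (hwm j).measurable))
  have hprod := eq_prod_of_measurePreserving_prodMap_id hinv
    (hsnd ▸ WeaklyMixing.ergodic_piMap hwm)
  rw [hfst, hsnd] at hprod
  exact e.map_measurableEquiv_injective
    (hprod.trans (measurePreserving_piFinSuccAbove μ p).map_eq.symm)

variable {X : Type*} [MeasurableSpace X] {T : X → X} {μ : Measure X} [IsProbabilityMeasure μ]

theorem measurePreserving_piMap_iterate_sub {ι : Type*} {ν : Measure (ι → X)} {k : ι → ℕ} {c : ℕ}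
    (hT : Measurable T) (hτ : MeasurePreserving (Pi.map fun _ => T) ν ν)
    (hσ : MeasurePreserving (Pi.map fun i => T^[k i]) ν ν) (hc : ∀ i, c ≤ k i) :
    MeasurePreserving (Pi.map fun i => T^[k i - c]) ν ν := by
  have hcomp : (Pi.map fun i => T^[k i - c]) ∘ (Pi.map fun _ => T)^[c] =
      Pi.map fun i : ι => T^[k i] := by
    ext x i
    simp [Pi.map_iterate, ← iterate_add_apply, Nat.sub_add_cancel (hc i)]
  have := (hcomp ▸ hσ).map_of_comp (measurable_piMap fun i => hT.iterate (k i - c))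
    (hτ.iterate c).measurable
  rwa [(hτ.iterate c).map_eq] at this

theorem WeaklyMixing.eq_pi_of_map_eval (hwm : WeaklyMixing T μ) {d : ℕ} {k : Fin d → ℕ}
    (hk : Injective k) {ν : Measure (Fin d → X)} [IsProbabilityMeasure ν]
    (hτ : MeasurePreserving (Pi.map fun _ => T) ν ν)
    (hσ : MeasurePreserving (Pi.map fun i => T^[k i]) ν ν) (hν : ∀ i, ν.map (eval i) = μ) :
    ν = Measure.pi fun _ => μ := by
  have hT := hwm.measurable
  induction d with
  | zero =>
    refine Measure.ext fun s _ => ?_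
    rcases s.eq_empty_or_nonempty with rfl | hs
    · simp
    · rw [hs.eq_univ, measure_univ, measure_univ]
  | succ d ih =>
    obtain ⟨p, hp⟩ := Finite.exists_min k
    have hpos (j : Fin d) : 0 < k (p.succAbove j) - k p :=
      Nat.sub_pos_of_lt <| (hp _).lt_of_ne fun h => p.succAbove_ne j (hk h.symm)
    have hrem : Measurable (p.removeNth : (Fin (d + 1) → X) → Fin d → X) :=
      measurable_pi_lambda _ fun j => measurable_pi_apply (p.succAbove j)
    have hprob : IsProbabilityMeasure (ν.map p.removeNth) :=
      Measure.isProbabilityMeasure_map hrem.aemeasurable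
    have hν' : ν.map p.removeNth = Measure.pi fun _ => μ :=
      ih (hk.comp p.succAbove_right_injective)
        ((hrem.measurePreserving ν).of_semiconj hτ (fun _ => rfl) (measurable_piMap fun _ => hT))
        ((hrem.measurePreserving ν).of_semiconj hσ (fun _ => rfl)
          (measurable_piMap fun _ => hT.iterate _))
        fun j => (Measure.map_map (measurable_pi_apply j) hrem).trans (hν (p.succAbove j))
    exact eq_pi_of_map_removeNth (S := fun i => T^[k i - k p]) (by simp)
      (fun j => hwm.iterate (hpos j)) (measurePreserving_piMap_iterate_sub hT hτ hσ hp) (hν p) hν'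

theorem prop_weakMixing_ap_general
    (huniq : ∀ ν : Measure X, IsProbabilityMeasure ν → MeasurePreserving T ν ν → ν = μ)
    (hwm : Ergodic (Prod.map T T) (μ.prod μ)) {d : ℕ} {k : Fin d → ℕ} (hk : Injective k) :
    (MeasurePreserving (Pi.map fun _ => T) (Measure.pi fun _ : Fin d => μ) (Measure.pi fun _ => μ) ∧
      MeasurePreserving (Pi.map fun i => T^[k i]) (Measure.pi fun _ : Fin d => μ)
        (Measure.pi fun _ => μ)) ∧
    ∀ ν : Measure (Fin d → X), IsProbabilityMeasure ν →
      MeasurePreserving (Pi.map fun _ => T) ν ν →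
      MeasurePreserving (Pi.map fun i => T^[k i]) ν ν → ν = Measure.pi fun _ => μ := by
  have hT := WeaklyMixing.of_ergodic_prodMap hwm
  refine ⟨⟨measurePreserving_pi _ _ fun _ => hT.toMeasurePreserving,
    measurePreserving_pi _ _ fun i => hT.toMeasurePreserving.iterate (k i)⟩,
    fun ν _ hτ hσ => hT.eq_pi_of_map_eval hk hτ hσ fun i => ?_⟩
  exact huniq _ (Measure.isProbabilityMeasure_map (measurable_pi_apply i).aemeasurable) <|
    ((measurable_pi_apply i).measurePreserving ν).of_semiconj hτ (fun _ => rfl) hT.measurable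

end Joining

theorem coe_tauHomeo {Y : Type*} [TopologicalSpace Y] (S : Y ≃ₜ Y) (d : ℕ) :
    ⇑(tauHomeo S d) = Pi.map fun _ : Fin d => S :=
  rfl

theorem coe_homeomorph_pow {Y : Type*} [TopologicalSpace Y] (S : Y ≃ₜ Y) (n : ℕ) :
    ⇑(S ^ n) = S^[n] := by
  induction n with
  | zero => rfl
  | succ n ih =>
    rw [pow_succ, iterate_succ, ← ih]
    rfl

theorem coe_sigmaHomeo {Y : Type*} [TopologicalSpace Y] (S : Y ≃ₜ Y) (d : ℕ) :
    ⇑(sigmaHomeo S d) = Pi.map fun i : Fin d => S^[(i : ℕ) + 1] :=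
  funext fun x => funext fun i => congrFun (coe_homeomorph_pow S (i + 1)) (x i)

/-- **Proposition (weakly mixing systems, arithmetic progressions).** Let `(X, T)` be a
uniquely ergodic t.d.s. whose unique invariant measure `μ` is weakly mixing and `d ≥ 1`.
Then the action on `X^d` of the group `⟨τ_d, σ_d⟩` generated by `τ_d = T × ⋯ × T` and
`σ_d = T × T² × ⋯ × T^d` is uniquely ergodic, with unique invariant measure the `d`-fold
product `μ × ⋯ × μ`. -/
theorem prop_weakMixing_ap {X : Type*} [MetricSpace X] [CompactSpace X]
    [MeasurableSpace X] [BorelSpace X] (T : X ≃ₜ X)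
    (μ : Measure X) [IsProbabilityMeasure μ] (hinv : MeasurePreserving T μ μ)
    (huniq : ∀ ν : Measure X, IsProbabilityMeasure ν → MeasurePreserving T ν ν → ν = μ)
    (hwm : Ergodic (Prod.map T T) (μ.prod μ)) (d : ℕ) (hd : 1 ≤ d) :
    (∀ g ∈ apGens T d,
        MeasurePreserving g (Measure.pi fun _ : Fin d => μ) (Measure.pi fun _ => μ)) ∧
    (∀ ν : Measure (Fin d → X), IsProbabilityMeasure ν →
      (∀ g ∈ apGens T d, MeasurePreserving g ν ν) →
      ν = Measure.pi fun _ => μ) := by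
  simpa [apGens, coe_tauHomeo, coe_sigmaHomeo] using prop_weakMixing_ap_general huniq hwm
    (k := fun i : Fin d => i + 1) fun i j h => Fin.ext (Nat.succ_injective h)

end HSY
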